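/- arXiv:1204.2998 — 3 statements merged into one kernel-verified Lean document; each statement's English description precedes it below -/
import Mathlib

section
/- For any two unit vectors v and w in a complex Hilbert space H with |⟨w, v⟩| = cos θ for θ ∈ [0, π/2], and any bounded self-adjoint operator A on H, setting v_A := A v − ⟨A⟩_v · v, one has |⟨w, v_A⟩| ≤ sin θ · Δ_v A. -/
open scoped InnerProductSpace

noncomputable def expVal {H : Type*} [NormedAddCommGroup H] [InnerProductSpace ℂ H]
    (A : H →L[ℂ] H) (v : H) : ℝ := (⟪v, A v⟫_ℂ).re

noncomputable def uncert {H : Type*} [NormedAddCommGroup H] [InnerProductSpace ℂ H]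
    (A : H →L[ℂ] H) (v : H) : ℝ :=
  Real.sqrt ((⟪v, A (A v)⟫_ℂ).re - (expVal A v) ^ 2)

/-!
Both factors are lengths of components orthogonal to `v`. The vector `v_A = A v - ⟨A⟩_v v` is the
component of `A v` orthogonal to `v`, and by Pythagoras its length is `Δ_v A`. Only the component
of `w` orthogonal to `v` contributes to `⟪w, v_A⟫`; its length is `√(1 - cos² θ) = sin θ`, and
Cauchy–Schwarz concludes.
-/

section OrthogonalComponent

variable {𝕜 E : Type*} [RCLike 𝕜] [NormedAddCommGroup E] [InnerProductSpace 𝕜 E] {v : E}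

theorem inner_sub_inner_smul_eq_zero (hv : ‖v‖ = 1) (x : E) : ⟪v, x - ⟪v, x⟫_𝕜 • v⟫_𝕜 = 0 := by
  simp [inner_sub_right, inner_smul_right, inner_self_eq_norm_sq_to_K, hv]

theorem norm_sub_inner_smul_sq (hv : ‖v‖ = 1) (x : E) :
    ‖x - ⟪v, x⟫_𝕜 • v‖ ^ 2 = ‖x‖ ^ 2 - ‖⟪v, x⟫_𝕜‖ ^ 2 := by
  have horth : ⟪x - ⟪v, x⟫_𝕜 • v, ⟪v, x⟫_𝕜 • v⟫_𝕜 = 0 := by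
    rw [inner_smul_right, inner_eq_zero_symm.mp (inner_sub_inner_smul_eq_zero hv x), mul_zero]
  have pythagoras := norm_add_sq_eq_norm_sq_add_norm_sq_of_inner_eq_zero _ _ horth
  rw [sub_add_cancel, norm_smul, hv, mul_one] at pythagoras
  linarith

theorem norm_sub_inner_smul (hv : ‖v‖ = 1) (x : E) :
    ‖x - ⟪v, x⟫_𝕜 • v‖ = √(‖x‖ ^ 2 - ‖⟪v, x⟫_𝕜‖ ^ 2) := by
  rw [← norm_sub_inner_smul_sq hv, Real.sqrt_sq (norm_nonneg _)]

theorem norm_inner_le_sqrt_mul_norm_of_inner_eq_zero (hv : ‖v‖ = 1) {u : E}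
    (hvu : ⟪v, u⟫_𝕜 = 0) (w : E) :
    ‖⟪w, u⟫_𝕜‖ ≤ √(‖w‖ ^ 2 - ‖⟪w, v⟫_𝕜‖ ^ 2) * ‖u‖ :=
  calc
    ‖⟪w, u⟫_𝕜‖ = ‖⟪w - ⟪v, w⟫_𝕜 • v, u⟫_𝕜‖ := by
      rw [inner_sub_left, inner_smul_left, hvu, mul_zero, sub_zero]
    _ ≤ ‖w - ⟪v, w⟫_𝕜 • v‖ * ‖u‖ := norm_inner_le_norm _ _
    _ = √(‖w‖ ^ 2 - ‖⟪w, v⟫_𝕜‖ ^ 2) * ‖u‖ := by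
      rw [norm_sub_inner_smul hv, norm_inner_symm]

end OrthogonalComponent

section Symmetric

variable {H : Type*} [NormedAddCommGroup H] [InnerProductSpace ℂ H] {A : H →L[ℂ] H} {v : H}

theorem ofReal_expVal (hA : (A : H →ₗ[ℂ] H).IsSymmetric) :
    (expVal A v : ℂ) = ⟪v, A v⟫_ℂ :=
  hA.coe_re_inner_self_apply v

theorem uncert_eq_norm_sub_expVal_smul (hA : (A : H →ₗ[ℂ] H).IsSymmetric) (hv : ‖v‖ = 1) :
    uncert A v = ‖A v - (expVal A v : ℂ) • v‖ := by
  have hsq : (⟪v, A (A v)⟫_ℂ).re = ‖A v‖ ^ 2 :=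
    calc
      (⟪v, A (A v)⟫_ℂ).re = (⟪A v, A v⟫_ℂ).re := congrArg Complex.re (hA v (A v)).symm
      _ = ‖A v‖ ^ 2 := inner_self_eq_norm_sq (𝕜 := ℂ) (A v)
  have hexp : expVal A v ^ 2 = ‖⟪v, A v⟫_ℂ‖ ^ 2 := by
    rw [← ofReal_expVal hA, Complex.norm_real, Real.norm_eq_abs, sq_abs]
  rw [uncert, hsq, hexp, ofReal_expVal hA, norm_sub_inner_smul hv]

theorem inner_orth_component_le_general (hA : (A : H →ₗ[ℂ] H).IsSymmetric) (hv : ‖v‖ = 1)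
    (w : H) :
    ‖⟪w, A v - (expVal A v : ℂ) • v⟫_ℂ‖ ≤ √(‖w‖ ^ 2 - ‖⟪w, v⟫_ℂ‖ ^ 2) * uncert A v := by
  have horth : ⟪v, A v - (expVal A v : ℂ) • v⟫_ℂ = 0 := by
    rw [ofReal_expVal hA, inner_sub_inner_smul_eq_zero hv]
  rw [uncert_eq_norm_sub_expVal_smul hA hv]
  exact norm_inner_le_sqrt_mul_norm_of_inner_eq_zero hv horth w

end Symmetric

/-- For unit vectors `v, w` with `|⟨w, v⟩| = cos θ`, `θ ∈ [0, π/2]`, and a bounded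
self-adjoint operator `A`, one has `|⟨w, v_A⟩| ≤ sin θ · Δ_v A`, where
`v_A = A v − ⟨A⟩_v v`. -/
theorem inner_orth_component_le {H : Type*} [NormedAddCommGroup H]
    [InnerProductSpace ℂ H] [CompleteSpace H] (v w : H) (hv : ‖v‖ = 1) (hw : ‖w‖ = 1)
    (θ : ℝ) (hθ : θ ∈ Set.Icc 0 (Real.pi / 2)) (hcos : ‖⟪w, v⟫_ℂ‖ = Real.cos θ)
    (A : H →L[ℂ] H) (hA : IsSelfAdjoint A) :
    ‖⟪w, A v - (expVal A v : ℂ) • v⟫_ℂ‖ ≤ Real.sin θ * uncert A v := by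
  rw [Real.sin_eq_sqrt_one_sub_cos_sq hθ.1 (hθ.2.trans (half_le_self Real.pi_pos.le)), ← hcos]
  simpa only [hw, one_pow] using inner_orth_component_le_general hA.isSymmetric hv w
end

section
/- Saturation of Fleming's quantum master inequality (necessity): let v and w be linearly independent unit vectors in a complex Hilbert space H with |⟨w, v⟩| = cos θ for some θ ∈ (0, π/2], and let A be a bounded self-adjoint operator on H. If |⟨A⟩_w − ⟨A⟩_v| · cos θ = (Δ_v A + Δ_w A) · sin θ, then (i) A maps the subspace ℂ·v + ℂ·w into itself, and (ii) there exists a real number λ with min{⟨A⟩_v, ⟨A⟩_w} ≤ λ ≤ max{⟨A⟩_v, ⟨A⟩_w} such that ⟨w, A v⟩ = λ · ⟨w, v⟩. -/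
open scoped InnerProductSpace

/-!
The deviation `(A - ⟨A⟩_v) v` is orthogonal to `v` and has norm `Δ_v A`, so Cauchy–Schwarz
against the component of `w` orthogonal to `v`, whose norm is `sin θ`, gives
`|⟨w, A v⟩ - ⟨A⟩_v ⟨w, v⟩| ≤ Δ_v A * sin θ`; exchanging `v` and `w` gives
`|⟨w, A v⟩ - ⟨A⟩_w ⟨w, v⟩| ≤ Δ_w A * sin θ`. The quantum master inequality is the triangle
inequality for the points `⟨A⟩_v ⟨w, v⟩`, `⟨w, A v⟩`, `⟨A⟩_w ⟨w, v⟩` of the scalar field. When it is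
saturated, the middle point lies on the segment joining the other two, which is (ii), and both
Cauchy–Schwarz inequalities are equalities, which puts the deviations of `v` and `w` in the span of
`v` and `w`, which is (i).
-/

theorem segment_smul_smul {K E : Type*} [Field K] [LinearOrder K] [IsStrictOrderedRing K]
    [AddCommGroup E] [Module K E] (a b : K) (z : E) :
    segment K (a • z) (b • z) = (fun l : K ↦ l • z) '' Set.uIcc a b := by
  rw [← segment_eq_uIcc]
  exact (image_segment K (LinearMap.toSpanSingleton K E z).toAffineMap a b).symm

theorem exists_mem_uIcc_eq_smul_of_dist_add_dist_eq {E : Type*} [NormedAddCommGroup E]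
    [NormedSpace ℝ E] [StrictConvexSpace ℝ E] {a b : ℝ} {y z : E}
    (h : dist (a • z) y + dist y (b • z) = dist (a • z) (b • z)) :
    ∃ l ∈ Set.uIcc a b, y = l • z := by
  have hy : y ∈ segment ℝ (a • z) (b • z) :=
    mem_segment_iff_wbtw.2 (dist_add_dist_eq_iff.1 h)
  rw [segment_smul_smul] at hy
  obtain ⟨l, hl, rfl⟩ := hy
  exact ⟨l, hl, rfl⟩

section InnerProduct

variable {𝕜 E : Type*} [RCLike 𝕜] [NormedAddCommGroup E] [InnerProductSpace 𝕜 E]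
  {v w p : E} {θ : ℝ}

theorem inner_sub_inner_smul_self_right (hv : ‖v‖ = 1) (w : E) :
    ⟪v, w - ⟪v, w⟫_𝕜 • v⟫_𝕜 = 0 := by
  simp [inner_sub_right, inner_smul_right, inner_self_eq_norm_sq_to_K, hv]

theorem norm_sub_inner_smul_self_sq (hv : ‖v‖ = 1) (w : E) :
    ‖w - ⟪v, w⟫_𝕜 • v‖ ^ 2 = ‖w‖ ^ 2 - ‖⟪v, w⟫_𝕜‖ ^ 2 := by
  have horth : ⟪⟪v, w⟫_𝕜 • v, w - ⟪v, w⟫_𝕜 • v⟫_𝕜 = 0 := by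
    rw [inner_smul_left, inner_sub_inner_smul_self_right hv, mul_zero]
  have hpyth := norm_add_sq_eq_norm_sq_add_norm_sq_of_inner_eq_zero _ _ horth
  rw [add_sub_cancel, norm_smul, hv, mul_one] at hpyth
  linarith

theorem norm_sub_inner_smul_self_eq_sin (hv : ‖v‖ = 1) (hw : ‖w‖ = 1) (hθ : 0 ≤ Real.sin θ)
    (hcos : ‖⟪w, v⟫_𝕜‖ = Real.cos θ) : ‖w - ⟪v, w⟫_𝕜 • v‖ = Real.sin θ := by
  rw [← sq_eq_sq₀ (norm_nonneg _) hθ, norm_sub_inner_smul_self_sq hv, hw, norm_inner_symm, hcos,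
    Real.sin_sq, one_pow]

theorem inner_sub_smul_left_of_inner_eq_zero (hp : ⟪v, p⟫_𝕜 = 0) (w : E) (c : 𝕜) :
    ⟪w - c • v, p⟫_𝕜 = ⟪w, p⟫_𝕜 := by
  rw [inner_sub_left, inner_smul_left, hp, mul_zero, sub_zero]

theorem norm_inner_le_norm_mul_sin (hv : ‖v‖ = 1) (hw : ‖w‖ = 1) (hθ : 0 ≤ Real.sin θ)
    (hcos : ‖⟪w, v⟫_𝕜‖ = Real.cos θ) (hp : ⟪v, p⟫_𝕜 = 0) :
    ‖⟪w, p⟫_𝕜‖ ≤ ‖p‖ * Real.sin θ := by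
  rw [← inner_sub_smul_left_of_inner_eq_zero hp w ⟪v, w⟫_𝕜,
    ← norm_sub_inner_smul_self_eq_sin hv hw hθ hcos, mul_comm]
  exact norm_inner_le_norm _ _

theorem mem_span_pair_of_norm_inner_eq_norm_mul_sin (hv : ‖v‖ = 1) (hw : ‖w‖ = 1)
    (hθ : 0 < Real.sin θ) (hcos : ‖⟪w, v⟫_𝕜‖ = Real.cos θ) (hp : ⟪v, p⟫_𝕜 = 0)
    (heq : ‖⟪w, p⟫_𝕜‖ = ‖p‖ * Real.sin θ) : p ∈ Submodule.span 𝕜 {v, w} := by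
  have hsin := norm_sub_inner_smul_self_eq_sin hv hw hθ.le hcos
  have hne : w - ⟪v, w⟫_𝕜 • v ≠ 0 := norm_pos_iff.1 (hsin ▸ hθ)
  rw [← inner_sub_smul_left_of_inner_eq_zero hp w ⟪v, w⟫_𝕜, ← hsin, mul_comm] at heq
  have hparallel : w - ⟪v, w⟫_𝕜 • v = 0 ∨ ∃ r : 𝕜, p = r • (w - ⟪v, w⟫_𝕜 • v) :=
    ((norm_inner_eq_norm_tfae 𝕜 _ p).out 0 2).1 heq
  obtain ⟨r, rfl⟩ := hparallel.resolve_left hne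
  have hv_mem : v ∈ Submodule.span 𝕜 {v, w} := Submodule.mem_span_of_mem (by simp)
  have hw_mem : w ∈ Submodule.span 𝕜 {v, w} := Submodule.mem_span_of_mem (by simp)
  exact Submodule.smul_mem _ r (Submodule.sub_mem _ hw_mem (Submodule.smul_mem _ _ hv_mem))

end InnerProduct

section Symmetric

variable {𝕜 E : Type*} [RCLike 𝕜] [NormedAddCommGroup E] [InnerProductSpace 𝕜 E]
  {T : E →ₗ[𝕜] E} {v w : E}

/-- The expectation value `⟨T⟩_v = re ⟪v, T v⟫`, for a linear map that need not be bounded. -/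
noncomputable def expectation (T : E →ₗ[𝕜] E) (v : E) : ℝ := RCLike.re ⟪v, T v⟫_𝕜

/-- The vector `(T - ⟨T⟩_v) v`. For symmetric `T` and `‖v‖ = 1` its norm is the uncertainty `Δ_v T`,
for which no separate definition is introduced in the unbounded case. -/
noncomputable def deviation (T : E →ₗ[𝕜] E) (v : E) : E := T v - (expectation T v : 𝕜) • v

theorem deviation_eq_sub_inner_smul (hT : T.IsSymmetric) (v : E) :
    deviation T v = T v - ⟪v, T v⟫_𝕜 • v := by
  rw [deviation, expectation, hT.coe_re_inner_self_apply]

theorem inner_self_deviation (hT : T.IsSymmetric) (hv : ‖v‖ = 1) :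
    ⟪v, deviation T v⟫_𝕜 = 0 := by
  rw [deviation_eq_sub_inner_smul hT, inner_sub_inner_smul_self_right hv]

theorem norm_deviation_sq (hT : T.IsSymmetric) (hv : ‖v‖ = 1) :
    ‖deviation T v‖ ^ 2 = RCLike.re ⟪v, T (T v)⟫_𝕜 - expectation T v ^ 2 := by
  rw [deviation_eq_sub_inner_smul hT, norm_sub_inner_smul_self_sq hv, ← hT v (T v),
    ← norm_sq_eq_re_inner, ← hT.coe_re_inner_self_apply, RCLike.norm_ofReal, sq_abs, expectation]

theorem inner_deviation_right (T : E →ₗ[𝕜] E) (v w : E) :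
    ⟪w, deviation T v⟫_𝕜 = ⟪w, T v⟫_𝕜 - expectation T v • ⟪w, v⟫_𝕜 := by
  rw [deviation, inner_sub_right, inner_smul_right, RCLike.real_smul_eq_coe_mul]

theorem inner_deviation_left (hT : T.IsSymmetric) (v w : E) :
    ⟪deviation T w, v⟫_𝕜 = ⟪w, T v⟫_𝕜 - expectation T w • ⟪w, v⟫_𝕜 := by
  rw [deviation, inner_sub_left, inner_smul_left, hT, RCLike.conj_ofReal,
    RCLike.real_smul_eq_coe_mul]

theorem apply_mem_of_deviation_mem {S : Submodule 𝕜 E} (hv : v ∈ S) (hdev : deviation T v ∈ S) :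
    T v ∈ S :=
  (S.sub_mem_iff_left (S.smul_mem _ hv)).1 hdev

theorem apply_mem_span_pair_of_deviation_mem (hv : deviation T v ∈ Submodule.span 𝕜 {v, w})
    (hw : deviation T w ∈ Submodule.span 𝕜 {v, w}) :
    ∀ x ∈ Submodule.span 𝕜 {v, w}, T x ∈ Submodule.span 𝕜 {v, w} :=
  Submodule.span_le (p := (Submodule.span 𝕜 {v, w}).comap T).2 <| Set.pair_subset
    (apply_mem_of_deviation_mem (Submodule.mem_span_of_mem (by simp)) hv)
    (apply_mem_of_deviation_mem (Submodule.mem_span_of_mem (by simp)) hw)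

theorem qmie_saturation_necessary_general {θ : ℝ} (hv : ‖v‖ = 1) (hw : ‖w‖ = 1)
    (hθ : 0 < Real.sin θ) (hcos : ‖⟪w, v⟫_𝕜‖ = Real.cos θ) (hT : T.IsSymmetric)
    (hsat : |expectation T w - expectation T v| * Real.cos θ =
      (‖deviation T v‖ + ‖deviation T w‖) * Real.sin θ) :
    (∀ x ∈ Submodule.span 𝕜 {v, w}, T x ∈ Submodule.span 𝕜 {v, w}) ∧
      ∃ l ∈ Set.uIcc (expectation T v) (expectation T w), ⟪w, T v⟫_𝕜 = (l : 𝕜) * ⟪w, v⟫_𝕜 := by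
  have hcos' : ‖⟪v, w⟫_𝕜‖ = Real.cos θ := by rw [norm_inner_symm, hcos]
  have hdev_v := inner_self_deviation hT hv
  have hdev_w := inner_self_deviation hT hw
  have hle_v := norm_inner_le_norm_mul_sin hv hw hθ.le hcos hdev_v
  have hle_w := norm_inner_le_norm_mul_sin hw hv hθ.le hcos' hdev_w
  have hdist_v : dist (expectation T v • ⟪w, v⟫_𝕜) ⟪w, T v⟫_𝕜 = ‖⟪w, deviation T v⟫_𝕜‖ := by
    rw [inner_deviation_right, dist_comm, dist_eq_norm]
  have hdist_w : dist ⟪w, T v⟫_𝕜 (expectation T w • ⟪w, v⟫_𝕜) = ‖⟪v, deviation T w⟫_𝕜‖ := by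
    rw [norm_inner_symm, inner_deviation_left hT, dist_eq_norm]
  have hdist : dist (expectation T v • ⟪w, v⟫_𝕜) (expectation T w • ⟪w, v⟫_𝕜) =
      ‖deviation T v‖ * Real.sin θ + ‖deviation T w‖ * Real.sin θ := by
    rw [← add_mul, ← hsat, dist_comm, dist_eq_norm, ← sub_smul, norm_smul, hcos, Real.norm_eq_abs]
  have htri := dist_triangle (expectation T v • ⟪w, v⟫_𝕜) ⟪w, T v⟫_𝕜 (expectation T w • ⟪w, v⟫_𝕜)
  constructor
  · have hmem_v := mem_span_pair_of_norm_inner_eq_norm_mul_sin hv hw hθ hcos hdev_v (by linarith)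
    have hmem_w := mem_span_pair_of_norm_inner_eq_norm_mul_sin hw hv hθ hcos' hdev_w (by linarith)
    exact apply_mem_span_pair_of_deviation_mem hmem_v (Set.pair_comm w v ▸ hmem_w)
  · simp only [← RCLike.real_smul_eq_coe_mul]
    exact exists_mem_uIcc_eq_smul_of_dist_add_dist_eq (by linarith)

end Symmetric

theorem uncert_eq_norm_deviation {H : Type*} [NormedAddCommGroup H] [InnerProductSpace ℂ H]
    {A : H →L[ℂ] H} (hA : (A : H →ₗ[ℂ] H).IsSymmetric) {v : H} (hv : ‖v‖ = 1) :
    uncert A v = ‖deviation (A : H →ₗ[ℂ] H) v‖ := by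
  rw [← Real.sqrt_sq (norm_nonneg (deviation _ v)), norm_deviation_sq hA hv]
  rfl

/-- Saturation of Fleming's quantum master inequality: necessity of the two conditions. -/
theorem qmie_saturation_necessary {H : Type*} [NormedAddCommGroup H]
    [InnerProductSpace ℂ H] [CompleteSpace H] (v w : H) (hv : ‖v‖ = 1) (hw : ‖w‖ = 1)
    (hli : LinearIndependent ℂ ![v, w])
    (θ : ℝ) (hθ : 0 < θ ∧ θ ≤ Real.pi / 2) (hcos : ‖⟪w, v⟫_ℂ‖ = Real.cos θ)
    (A : H →L[ℂ] H) (hA : IsSelfAdjoint A)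
    (hsat : |expVal A w - expVal A v| * Real.cos θ =
      (uncert A v + uncert A w) * Real.sin θ) :
    (∀ x ∈ Submodule.span ℂ ({v, w} : Set H), A x ∈ Submodule.span ℂ ({v, w} : Set H)) ∧
      ∃ l : ℝ, min (expVal A v) (expVal A w) ≤ l ∧ l ≤ max (expVal A v) (expVal A w) ∧
        ⟪w, A v⟫_ℂ = (l : ℂ) * ⟪w, v⟫_ℂ := by
  have hsin : 0 < Real.sin θ := Real.sin_pos_of_pos_of_lt_pi hθ.1 (by linarith [Real.pi_pos])
  have hsymm := hA.isSymmetric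
  rw [uncert_eq_norm_deviation hsymm hv, uncert_eq_norm_deviation hsymm hw] at hsat
  obtain ⟨hinv, l, ⟨hmin, hmax⟩, hl⟩ :=
    qmie_saturation_necessary_general hv hw hsin hcos hsymm hsat
  exact ⟨hinv, l, hmin, hmax, hl⟩
end

section
/- Fleming's bound is attained by each member of the parametrized family: let v and w be unit vectors in a complex Hilbert space H with ⟨v, w⟩ = cos θ for some θ ∈ (0, π/2), let α ∈ [θ, π−θ], and let A₀ = cos α (e₁⟨e₁,·⟩ − e₂⟨e₂,·⟩) + sin α (e₁⟨e₂,·⟩ + e₂⟨e₁,·⟩) on span{e₁,e₂} (zero on the orthogonal complement), where e₁ = (v+w)/(2 cos(θ/2)) and e₂ = (w−v)/(2 sin(θ/2)). Then ⟨A₀⟩_w − ⟨A₀⟩_v = 2 sin θ sin α, Δ_v A₀ + Δ_w A₀ = 2 sin α cos θ > 0, and δ_{A₀} = tan θ. -/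
open scoped InnerProductSpace

noncomputable def discern {H : Type*} [NormedAddCommGroup H] [InnerProductSpace ℂ H]
    (A : H →L[ℂ] H) (v w : H) : ℝ :=
  |expVal A w - expVal A v| / (uncert A v + uncert A w)

/-- The rank-one operator `z ↦ ⟨y, z⟩ x`. -/
noncomputable def rankOne {H : Type*} [NormedAddCommGroup H] [InnerProductSpace ℂ H]
    (x y : H) : H →L[ℂ] H := (innerSL ℂ y).smulRight x

/-! With `u φ = cos φ • e₁ + sin φ • e₂`, the observable `A₀` acts on the real span of `e₁` and `e₂`
as the reflection `u φ ↦ u (α - φ)`. Since `A₀ (A₀ (u φ)) = u φ`, its expectation value at `u φ` is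
`cos (α - 2 φ)` and its uncertainty is `|sin (α - 2 φ)|`. As `v = u (-θ / 2)` and `w = u (θ / 2)`,
the claim reduces to the product formulas for `cos (α - θ) - cos (α + θ)` and
`sin (α + θ) + sin (α - θ)`; both sines are nonnegative because `θ ≤ α ≤ π - θ`. -/

section AngleBetweenUnitVectors

variable {𝕜 H : Type*} [RCLike 𝕜] [NormedAddCommGroup H] [InnerProductSpace 𝕜 H] {v w : H} {θ : ℝ}

theorem norm_add_eq_two_mul_abs_cos_half (hv : ‖v‖ = 1) (hw : ‖w‖ = 1)
    (hvw : RCLike.re (inner 𝕜 v w) = Real.cos θ) : ‖v + w‖ = 2 * |Real.cos (θ / 2)| := by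
  rw [← sq_eq_sq₀ (norm_nonneg _) (by positivity), norm_add_sq (𝕜 := 𝕜), hv, hw, hvw, mul_pow,
    sq_abs, Real.cos_sq, mul_div_cancel₀ θ two_ne_zero]
  ring

theorem norm_sub_eq_two_mul_abs_sin_half (hv : ‖v‖ = 1) (hw : ‖w‖ = 1)
    (hvw : RCLike.re (inner 𝕜 v w) = Real.cos θ) : ‖v - w‖ = 2 * |Real.sin (θ / 2)| := by
  rw [← sq_eq_sq₀ (norm_nonneg _) (by positivity), norm_sub_sq (𝕜 := 𝕜), hv, hw, hvw, mul_pow,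
    sq_abs, Real.sin_sq_eq_half_sub, mul_div_cancel₀ θ two_ne_zero]
  ring

theorem inner_add_sub_eq_zero_of_norm_eq (hnorm : ‖v‖ = ‖w‖)
    (him : RCLike.im (inner 𝕜 v w) = 0) : inner 𝕜 (v + w) (w - v) = 0 := by
  have hsymm : inner 𝕜 w v = inner 𝕜 v w := by
    rw [← inner_conj_symm, RCLike.conj_eq_iff_im.mpr him]
  rw [inner_add_left, inner_sub_right, inner_sub_right, hsymm, inner_self_eq_norm_sq_to_K,
    inner_self_eq_norm_sq_to_K, hnorm]
  ring

end AngleBetweenUnitVectors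

section SaturatingFamily

variable {H : Type*} [NormedAddCommGroup H] [InnerProductSpace ℂ H]

theorem rankOne_apply (x y z : H) : rankOne x y z = ⟪y, z⟫_ℂ • x := rfl

theorem uncert_of_apply_apply_eq_self {A : H →L[ℂ] H} {v : H} (hv : ‖v‖ = 1)
    (hA : A (A v) = v) : uncert A v = √(1 - expVal A v ^ 2) := by
  rw [uncert, hA, inner_self_eq_one_of_norm_eq_one hv, Complex.one_re]

/-- The vector `e₁` of the paper: for unit vectors `v`, `w` at angle `θ`, the normalization of
`v + w`. -/
noncomputable def sumDirection (v w : H) (θ : ℝ) : H :=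
  ((2 * Real.cos (θ / 2) : ℝ) : ℂ)⁻¹ • (v + w)

/-- The vector `e₂` of the paper: for unit vectors `v`, `w` at angle `θ`, the normalization of
`w - v`. -/
noncomputable def diffDirection (v w : H) (θ : ℝ) : H :=
  ((2 * Real.sin (θ / 2) : ℝ) : ℂ)⁻¹ • (w - v)

/-- For orthonormal `e₁`, `e₂`, the point at angle `φ` from `e₁` on the unit circle of their
*real* span. -/
noncomputable def circlePoint (e₁ e₂ : H) (φ : ℝ) : H :=
  (Real.cos φ : ℂ) • e₁ + (Real.sin φ : ℂ) • e₂

/-- The observable `A₀` of the paper: for orthonormal `e₁`, `e₂`, the reflection of their span that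
fixes the direction at angle `α / 2` from `e₁`, extended by zero to the orthogonal complement. -/
noncomputable def planeReflection (e₁ e₂ : H) (α : ℝ) : H →L[ℂ] H :=
  ((Real.cos α : ℝ) : ℂ) • (rankOne e₁ e₁ - rankOne e₂ e₂) +
    ((Real.sin α : ℝ) : ℂ) • (rankOne e₁ e₂ + rankOne e₂ e₁)

section Directions

variable {v w : H} {θ : ℝ}

theorem norm_sumDirection (hv : ‖v‖ = 1) (hw : ‖w‖ = 1) (hvw : (⟪v, w⟫_ℂ).re = Real.cos θ)
    (hc : Real.cos (θ / 2) ≠ 0) : ‖sumDirection v w θ‖ = 1 := by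
  rw [sumDirection, norm_smul, norm_inv, Complex.norm_real, Real.norm_eq_abs, abs_mul, abs_two,
    norm_add_eq_two_mul_abs_cos_half (𝕜 := ℂ) hv hw hvw, inv_mul_cancel₀ (by positivity)]

theorem norm_diffDirection (hv : ‖v‖ = 1) (hw : ‖w‖ = 1) (hvw : (⟪v, w⟫_ℂ).re = Real.cos θ)
    (hs : Real.sin (θ / 2) ≠ 0) : ‖diffDirection v w θ‖ = 1 := by
  rw [diffDirection, norm_smul, norm_inv, Complex.norm_real, Real.norm_eq_abs, abs_mul, abs_two,
    norm_sub_rev, norm_sub_eq_two_mul_abs_sin_half (𝕜 := ℂ) hv hw hvw,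
    inv_mul_cancel₀ (by positivity)]

theorem inner_sumDirection_diffDirection (hnorm : ‖v‖ = ‖w‖) (him : (⟪v, w⟫_ℂ).im = 0) :
    ⟪sumDirection v w θ, diffDirection v w θ⟫_ℂ = 0 := by
  rw [sumDirection, diffDirection, inner_smul_left, inner_smul_right,
    inner_add_sub_eq_zero_of_norm_eq hnorm him, mul_zero, mul_zero]

theorem orthonormal_sumDirection_diffDirection (hv : ‖v‖ = 1) (hw : ‖w‖ = 1)
    (hvw : ⟪v, w⟫_ℂ = Real.cos θ) (hc : Real.cos (θ / 2) ≠ 0) (hs : Real.sin (θ / 2) ≠ 0) :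
    Orthonormal ℂ ![sumDirection v w θ, diffDirection v w θ] := by
  have hre : (⟪v, w⟫_ℂ).re = Real.cos θ := by rw [hvw, Complex.ofReal_re]
  have him : (⟪v, w⟫_ℂ).im = 0 := by rw [hvw, Complex.ofReal_im]
  simp [orthonormal_vecCons_iff, norm_sumDirection hv hw hre hc, norm_diffDirection hv hw hre hs,
    inner_sumDirection_diffDirection (hv.trans hw.symm) him]

theorem cos_smul_sumDirection (v w : H) (hc : Real.cos (θ / 2) ≠ 0) :
    (Real.cos (θ / 2) : ℂ) • sumDirection v w θ = (2 : ℂ)⁻¹ • (v + w) := by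
  rw [sumDirection, smul_smul, Complex.ofReal_mul, Complex.ofReal_ofNat, mul_inv_rev,
    mul_inv_cancel_left₀ (Complex.ofReal_ne_zero.mpr hc)]

theorem sin_smul_diffDirection (v w : H) (hs : Real.sin (θ / 2) ≠ 0) :
    (Real.sin (θ / 2) : ℂ) • diffDirection v w θ = (2 : ℂ)⁻¹ • (w - v) := by
  rw [diffDirection, smul_smul, Complex.ofReal_mul, Complex.ofReal_ofNat, mul_inv_rev,
    mul_inv_cancel_left₀ (Complex.ofReal_ne_zero.mpr hs)]

theorem circlePoint_half (v w : H) (hc : Real.cos (θ / 2) ≠ 0) (hs : Real.sin (θ / 2) ≠ 0) :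
    circlePoint (sumDirection v w θ) (diffDirection v w θ) (θ / 2) = w := by
  rw [circlePoint, cos_smul_sumDirection v w hc, sin_smul_diffDirection v w hs]
  module

theorem circlePoint_neg_half (v w : H) (hc : Real.cos (θ / 2) ≠ 0)
    (hs : Real.sin (θ / 2) ≠ 0) :
    circlePoint (sumDirection v w θ) (diffDirection v w θ) (-(θ / 2)) = v := by
  rw [circlePoint, Real.cos_neg, Real.sin_neg, Complex.ofReal_neg, neg_smul,
    cos_smul_sumDirection v w hc, sin_smul_diffDirection v w hs]
  module

end Directions

section Reflection

variable {e₁ e₂ : H}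

theorem inner_left_circlePoint (he : Orthonormal ℂ ![e₁, e₂]) (φ : ℝ) :
    ⟪e₁, circlePoint e₁ e₂ φ⟫_ℂ = Real.cos φ := by
  have h₁₁ : ⟪e₁, e₁⟫_ℂ = 1 := inner_self_eq_one_of_norm_eq_one (he.1 0)
  have h₁₂ : ⟪e₁, e₂⟫_ℂ = 0 := he.2 zero_ne_one
  rw [circlePoint, inner_add_right, inner_smul_right, inner_smul_right, h₁₁, h₁₂, mul_one,
    mul_zero, add_zero]

theorem inner_right_circlePoint (he : Orthonormal ℂ ![e₁, e₂]) (φ : ℝ) :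
    ⟪e₂, circlePoint e₁ e₂ φ⟫_ℂ = Real.sin φ := by
  have h₂₁ : ⟪e₂, e₁⟫_ℂ = 0 := he.2 one_ne_zero
  have h₂₂ : ⟪e₂, e₂⟫_ℂ = 1 := inner_self_eq_one_of_norm_eq_one (he.1 1)
  rw [circlePoint, inner_add_right, inner_smul_right, inner_smul_right, h₂₁, h₂₂, mul_one,
    mul_zero, zero_add]

theorem inner_circlePoint_circlePoint (he : Orthonormal ℂ ![e₁, e₂]) (φ ψ : ℝ) :
    ⟪circlePoint e₁ e₂ φ, circlePoint e₁ e₂ ψ⟫_ℂ = Real.cos (φ - ψ) := by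
  rw [circlePoint, inner_add_left, inner_smul_left, inner_smul_left, Complex.conj_ofReal,
    Complex.conj_ofReal, inner_left_circlePoint he, inner_right_circlePoint he, Real.cos_sub,
    Complex.ofReal_add, Complex.ofReal_mul, Complex.ofReal_mul]

theorem norm_circlePoint (he : Orthonormal ℂ ![e₁, e₂]) (φ : ℝ) :
    ‖circlePoint e₁ e₂ φ‖ = 1 := by
  rw [norm_eq_sqrt_re_inner (𝕜 := ℂ), inner_circlePoint_circlePoint he, sub_self, Real.cos_zero]
  simp

theorem planeReflection_circlePoint (he : Orthonormal ℂ ![e₁, e₂]) (α φ : ℝ) :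
    planeReflection e₁ e₂ α (circlePoint e₁ e₂ φ) = circlePoint e₁ e₂ (α - φ) := by
  simp only [planeReflection, add_apply, sub_apply, smul_apply, rankOne_apply,
    inner_left_circlePoint he, inner_right_circlePoint he]
  simp only [circlePoint, Real.cos_sub, Real.sin_sub, Complex.ofReal_add, Complex.ofReal_sub,
    Complex.ofReal_mul]
  module

theorem expVal_planeReflection_circlePoint (he : Orthonormal ℂ ![e₁, e₂]) (α φ : ℝ) :
    expVal (planeReflection e₁ e₂ α) (circlePoint e₁ e₂ φ) = Real.cos (α - 2 * φ) := by
  rw [expVal, planeReflection_circlePoint he, inner_circlePoint_circlePoint he,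
    Complex.ofReal_re, ← Real.cos_neg]
  ring_nf

theorem uncert_planeReflection_circlePoint (he : Orthonormal ℂ ![e₁, e₂]) (α φ : ℝ) :
    uncert (planeReflection e₁ e₂ α) (circlePoint e₁ e₂ φ) = |Real.sin (α - 2 * φ)| := by
  have hinvol : planeReflection e₁ e₂ α (planeReflection e₁ e₂ α (circlePoint e₁ e₂ φ)) =
      circlePoint e₁ e₂ φ := by
    simp only [planeReflection_circlePoint he, sub_sub_cancel]
  rw [uncert_of_apply_apply_eq_self (norm_circlePoint he φ) hinvol,
    expVal_planeReflection_circlePoint he, Real.abs_sin_eq_sqrt_one_sub_cos_sq]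

theorem expVal_sub_expVal_circlePoint_half (he : Orthonormal ℂ ![e₁, e₂]) (α θ : ℝ) :
    expVal (planeReflection e₁ e₂ α) (circlePoint e₁ e₂ (θ / 2)) -
        expVal (planeReflection e₁ e₂ α) (circlePoint e₁ e₂ (-(θ / 2))) =
      2 * Real.sin θ * Real.sin α := by
  rw [expVal_planeReflection_circlePoint he, expVal_planeReflection_circlePoint he, mul_neg,
    mul_div_cancel₀ θ two_ne_zero, sub_neg_eq_add, mul_right_comm, Real.two_mul_sin_mul_sin]

theorem uncert_add_uncert_circlePoint_half (he : Orthonormal ℂ ![e₁, e₂]) {α θ : ℝ} (hθ : 0 ≤ θ)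
    (hα : α ∈ Set.Icc θ (Real.pi - θ)) :
    uncert (planeReflection e₁ e₂ α) (circlePoint e₁ e₂ (-(θ / 2))) +
        uncert (planeReflection e₁ e₂ α) (circlePoint e₁ e₂ (θ / 2)) =
      2 * Real.sin α * Real.cos θ := by
  obtain ⟨hα₀, hα₁⟩ := hα
  have hadd : 0 ≤ Real.sin (α + θ) :=
    Real.sin_nonneg_of_nonneg_of_le_pi (by linarith) (by linarith)
  have hsub : 0 ≤ Real.sin (α - θ) :=
    Real.sin_nonneg_of_nonneg_of_le_pi (by linarith) (by linarith)
  rw [uncert_planeReflection_circlePoint he, uncert_planeReflection_circlePoint he, mul_neg,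
    mul_div_cancel₀ θ two_ne_zero, sub_neg_eq_add, abs_of_nonneg hadd, abs_of_nonneg hsub,
    add_comm, Real.two_mul_sin_mul_cos]

end Reflection

theorem saturating_family_attains_bound_general (v w : H) (hv : ‖v‖ = 1) (hw : ‖w‖ = 1)
    (θ : ℝ) (hθ : θ ∈ Set.Ioo 0 (Real.pi / 2)) (hcos : ⟪v, w⟫_ℂ = (Real.cos θ : ℂ))
    (α : ℝ) (hα : α ∈ Set.Icc θ (Real.pi - θ)) (A₀ : H →L[ℂ] H)
    (hA₀ : A₀ = planeReflection (sumDirection v w θ) (diffDirection v w θ) α) :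
    expVal A₀ w - expVal A₀ v = 2 * Real.sin θ * Real.sin α ∧
      uncert A₀ v + uncert A₀ w = 2 * Real.sin α * Real.cos θ ∧
      0 < uncert A₀ v + uncert A₀ w ∧
      discern A₀ v w = Real.tan θ := by
  obtain ⟨hθ₀, hθ₁⟩ := hθ
  have hc : Real.cos (θ / 2) ≠ 0 := (Real.cos_pos_of_mem_Ioo ⟨by linarith, by linarith⟩).ne'
  have hs : Real.sin (θ / 2) ≠ 0 := (Real.sin_pos_of_pos_of_lt_pi (by linarith) (by linarith)).ne'
  have hcosθ : 0 < Real.cos θ := Real.cos_pos_of_mem_Ioo ⟨by linarith, hθ₁⟩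
  have hsinθ : 0 < Real.sin θ := Real.sin_pos_of_pos_of_lt_pi hθ₀ (by linarith)
  have hsinα : 0 < Real.sin α :=
    Real.sin_pos_of_pos_of_lt_pi (hθ₀.trans_le hα.1) (by linarith [hα.2])
  have he := orthonormal_sumDirection_diffDirection hv hw hcos hc hs
  have hexp := expVal_sub_expVal_circlePoint_half he α θ
  have hunc := uncert_add_uncert_circlePoint_half he hθ₀.le hα
  rw [circlePoint_half v w hc hs, circlePoint_neg_half v w hc hs, ← hA₀] at hexp hunc
  refine ⟨hexp, hunc, by rw [hunc]; positivity, ?_⟩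
  rw [discern, hexp, hunc, abs_of_pos (by positivity), Real.tan_eq_sin_div_cos]
  field_simp

end SaturatingFamily

/-- Each member of the parametrized family attains Fleming's bound `tan θ`. -/
theorem saturating_family_attains_bound {H : Type*} [NormedAddCommGroup H]
    [InnerProductSpace ℂ H] [CompleteSpace H] (v w : H) (hv : ‖v‖ = 1) (hw : ‖w‖ = 1)
    (θ : ℝ) (hθ : θ ∈ Set.Ioo 0 (Real.pi / 2)) (hcos : ⟪v, w⟫_ℂ = (Real.cos θ : ℂ))
    (α : ℝ) (hα : α ∈ Set.Icc θ (Real.pi - θ)) (e₁ e₂ : H)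
    (he₁ : e₁ = ((2 * Real.cos (θ / 2) : ℝ) : ℂ)⁻¹ • (v + w))
    (he₂ : e₂ = ((2 * Real.sin (θ / 2) : ℝ) : ℂ)⁻¹ • (w - v))
    (A₀ : H →L[ℂ] H)
    (hA₀ : A₀ = ((Real.cos α : ℝ) : ℂ) • (rankOne e₁ e₁ - rankOne e₂ e₂) +
      ((Real.sin α : ℝ) : ℂ) • (rankOne e₁ e₂ + rankOne e₂ e₁)) :
    expVal A₀ w - expVal A₀ v = 2 * Real.sin θ * Real.sin α ∧
      uncert A₀ v + uncert A₀ w = 2 * Real.sin α * Real.cos θ ∧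
      0 < uncert A₀ v + uncert A₀ w ∧
      discern A₀ v w = Real.tan θ := by
  subst he₁ he₂
  exact saturating_family_attains_bound_general v w hv hw θ hθ hcos α hα A₀ hA₀
end
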